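/- Let ξ = {ξ_i, i ∈ ℤ^d} be a strictly stationary ℝ^m-valued random field and let b ∈ ℝ^m. For n ∈ (0,∞)^d and t ∈ [0,∞)^d set S_{[n·t]}(ξ−b) = Σ_{i₁=1}^{[n₁t₁]} ⋯ Σ_{i_d=1}^{[n_dt_d]} (ξ_{(i₁,...,i_d)} − b) (componentwise floors). Suppose there exists f = (f₁,...,f_m) : (0,∞)^d → (0,∞)^m with f_j(n) → ∞ as n → ∞ such that the fields {S_{[n·t]}(ξ−b)_j / f_j(n), t ∈ [0,∞)^d, j = 1,...,m} converge in finite-dimensional distributions, as n → ∞, to an ℝ^m-valued random field X that is continuous in probability and such that X_j(t) is not almost surely constant for every j and every t ∈ (0,∞)^d. Then f_j(n) = (∏_{i=1}^d n_i^{H_i^{(j)}})·L_j(n) with nonnegative reals H_i^{(j)} and coordinate-wise slowly varying functions L_j, and X is multi-self-similar: for every a ∈ (0,∞)^d, {X(a·t)} =_{f.d.d.} {(∏_i a_i^{H_i^{(j)}}·X_j(t))_{j=1}^m}. -/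

import Mathlib

open MeasureTheory Filter Topology

/-!
Lamperti's argument. Fix `a` in the open orthant and put `r n = f_j (n * a) / f_j n`. Up to
`j`-th components, `S_{[n·a·t]} / f n = r n • (S_{[(n·a)·t]} / f (n * a))`, and for `t = 1` both
normalised sums converge to laws other than the Dirac mass at `0`; by convergence of types `r n`
converges to some `c_j a > 0`. The function `c_j` is multiplicative, and letting `n → ∞` for
arbitrary `t` shows that `X (a * t)` and `c a • X t` have the same finite-dimensional distributions.
If `0 < x < 1`, the laws of `X_j` at `(1, …, x ^ n, …, 1)` are dilations of one nonzero law by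
`c_j (1, …, x, …, 1) ^ n` and converge, by continuity in probability at a boundary point of the
orthant; so `c_j (1, …, x, …, 1) ≤ 1`. Hence `c_j` is monotone in each coordinate, and a monotone
multiplicative function is a power with nonnegative exponent.
-/

section Dilation

variable {R E : Type*} [TopologicalSpace E] [MeasurableSpace E] [BorelSpace E]

/-- The law of `c • Z` when `Z` has law `μ`. -/
noncomputable def dilate [SMul R E] [ContinuousConstSMul R E] (c : R) (μ : ProbabilityMeasure E) :
    ProbabilityMeasure E :=
  μ.map (f := (c • ·)) (continuous_const_smul c).measurable.aemeasurable

theorem dilate_one [Monoid R] [MulAction R E] [ContinuousConstSMul R E]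
    (μ : ProbabilityMeasure E) : dilate (1 : R) μ = μ := by
  ext1
  simp [dilate]

theorem dilate_dilate [Monoid R] [MulAction R E] [ContinuousConstSMul R E] (c c' : R)
    (μ : ProbabilityMeasure E) : dilate c (dilate c' μ) = dilate (c * c') μ := by
  apply Subtype.ext
  change Measure.map (c • ·) (Measure.map (c' • ·) (μ : Measure E)) = Measure.map _ _
  rw [Measure.map_map (continuous_const_smul c).measurable (continuous_const_smul c').measurable]
  simp only [Function.comp_def, smul_smul]

theorem dilate_zero [Zero R] [Zero E] [SMulWithZero R E] [ContinuousConstSMul R E]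
    (μ : ProbabilityMeasure E) : dilate (0 : R) μ = diracProba 0 := by
  apply Subtype.ext
  simp [dilate, ProbabilityMeasure.map, diracProba]

theorem continuous_dilate [TopologicalSpace R] [SecondCountableTopology R]
    [TopologicalSpace.PseudoMetrizableSpace R] [SecondCountableTopology E]
    [TopologicalSpace.PseudoMetrizableSpace E] [SMul R E] [ContinuousSMul R E] :
    Continuous fun p : R × ProbabilityMeasure E => dilate p.1 p.2 := by
  borelize R
  have hprod : Continuous fun p : R × ProbabilityMeasure E => (diracProba p.1).prod p.2 :=
    ProbabilityMeasure.continuous_prod.comp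
      ((continuous_diracProba.comp continuous_fst).prodMk continuous_snd)
  have hsmul : Continuous fun x : R × E => x.1 • x.2 := continuous_smul
  refine ((ProbabilityMeasure.continuous_map hsmul).comp hprod).congr fun p => Subtype.ext ?_
  change Measure.map _ ((Measure.dirac p.1).prod (p.2 : Measure E)) = Measure.map _ _
  rw [Measure.dirac_prod, Measure.map_map hsmul.measurable measurable_prodMk_left]
  rfl

theorem tendsto_dilate [TopologicalSpace R] [SecondCountableTopology R]
    [TopologicalSpace.PseudoMetrizableSpace R] [SecondCountableTopology E]
    [TopologicalSpace.PseudoMetrizableSpace E] [SMul R E] [ContinuousSMul R E]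
    {α : Type*} {l : Filter α} {r : α → R} {c : R} {μs : α → ProbabilityMeasure E}
    {μ : ProbabilityMeasure E} (hr : Tendsto r l (𝓝 c)) (hμ : Tendsto μs l (𝓝 μ)) :
    Tendsto (fun i => dilate (r i) (μs i)) l (𝓝 (dilate c μ)) :=
  (continuous_dilate.tendsto (c, μ)).comp (hr.prodMk_nhds hμ)

end Dilation

section ConvergenceOfTypes

variable {α E : Type*} [NormedAddCommGroup E] [NormedSpace ℝ E] [SecondCountableTopology E]
  [MeasurableSpace E] [BorelSpace E] {μ ν : ProbabilityMeasure E}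

theorem eq_diracProba_zero_of_tendsto_dilate_atTop {l : Filter α} [l.NeBot] {r : α → ℝ}
    {μs : α → ProbabilityMeasure E} (hμ : Tendsto μs l (𝓝 μ))
    (hν : Tendsto (fun i => dilate (r i) (μs i)) l (𝓝 ν))
    (hr : Tendsto (fun i => |r i|) l atTop) : μ = diracProba 0 := by
  have hinv : Tendsto (fun i => (r i)⁻¹) l (𝓝 0) :=
    tendsto_zero_iff_abs_tendsto_zero _ |>.2 <| by
      simpa only [Function.comp_def, abs_inv] using tendsto_inv_atTop_zero.comp hr
  have hlim := tendsto_dilate hinv hν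
  rw [dilate_zero] at hlim
  refine tendsto_nhds_unique hμ (hlim.congr' ?_)
  filter_upwards [hr.eventually_gt_atTop 0] with i hi
  rw [dilate_dilate, inv_mul_cancel₀ (abs_pos.1 hi), dilate_one]

theorem abs_le_one_of_tendsto_dilate_pow (hμ : μ ≠ diracProba 0) {q : ℝ}
    (h : Tendsto (fun n : ℕ => dilate (q ^ n) μ) atTop (𝓝 ν)) : |q| ≤ 1 := by
  by_contra! hq
  refine hμ (eq_diracProba_zero_of_tendsto_dilate_atTop tendsto_const_nhds h ?_)
  simpa only [abs_pow] using tendsto_pow_atTop_atTop_of_one_lt hq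

theorem abs_le_one_of_dilate_eq_self (hμ : μ ≠ diracProba 0) {q : ℝ} (h : dilate q μ = μ) :
    |q| ≤ 1 := by
  have hpow (n : ℕ) : dilate (q ^ n) μ = μ := by
    induction n with
    | zero => rw [pow_zero, dilate_one]
    | succ n ih => rw [pow_succ, ← dilate_dilate, h, ih]
  refine abs_le_one_of_tendsto_dilate_pow hμ (ν := μ) ?_
  simpa only [hpow] using tendsto_const_nhds

theorem abs_le_abs_of_dilate_eq_dilate (hμ : μ ≠ diracProba 0) {a b : ℝ} (hb : b ≠ 0)
    (h : dilate a μ = dilate b μ) : |a| ≤ |b| := by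
  have hself : dilate (b⁻¹ * a) μ = μ := by
    rw [← dilate_dilate, h, dilate_dilate, inv_mul_cancel₀ hb, dilate_one]
  have hle := abs_le_one_of_dilate_eq_self hμ hself
  rwa [abs_mul, abs_inv, inv_mul_le_iff₀ (abs_pos.2 hb), mul_one] at hle

theorem dilate_injOn_Ioi (hμ : μ ≠ diracProba 0) :
    Set.InjOn (fun c : ℝ => dilate c μ) (Set.Ioi 0) := by
  intro a ha b hb h
  have hab := le_antisymm (abs_le_abs_of_dilate_eq_dilate hμ (ne_of_gt hb) h)
    (abs_le_abs_of_dilate_eq_dilate hμ (ne_of_gt ha) h.symm)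
  rwa [abs_of_pos ha, abs_of_pos hb] at hab

theorem exists_tendsto_nhds_pos_of_tendsto_dilate_ultrafilter {U : Ultrafilter α} {r : α → ℝ}
    {μs : α → ProbabilityMeasure E} (hμs : Tendsto μs U (𝓝 μ))
    (hνs : Tendsto (fun i => dilate (r i) (μs i)) U (𝓝 ν)) (hr : ∀ᶠ i in U, 0 < r i)
    (hμ : μ ≠ diracProba 0) (hν : ν ≠ diracProba 0) :
    ∃ c, 0 < c ∧ Tendsto r U (𝓝 c) := by
  have hbdd : ¬ Tendsto r U atTop := fun h =>
    hμ (eq_diracProba_zero_of_tendsto_dilate_atTop hμs hνs (tendsto_abs_atTop_atTop.comp h))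
  obtain ⟨M, hM⟩ : ∃ M, ∀ᶠ i in U, r i < M := by
    simpa only [tendsto_atTop, not_forall, ← Ultrafilter.eventually_not, not_le] using hbdd
  obtain ⟨c, ⟨hc, -⟩, hrc⟩ := isCompact_Icc.ultrafilter_le_nhds (s := Set.Icc 0 M) (U.map r)
    (le_principal_iff.2 ((hr.and hM).mono fun i hi => ⟨hi.1.le, hi.2.le⟩))
  refine ⟨c, hc.lt_of_ne ?_, hrc⟩
  rintro rfl
  exact hν (tendsto_nhds_unique hνs (dilate_zero (R := ℝ) μ ▸ tendsto_dilate hrc hμs))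

-- Every ultrafilter limit `c` of `r` satisfies `ν = dilate c μ`, and this equation determines `c`.
theorem exists_tendsto_nhds_pos_of_tendsto_dilate {l : Filter α} [l.NeBot] {r : α → ℝ}
    {μs : α → ProbabilityMeasure E} (hμs : Tendsto μs l (𝓝 μ))
    (hνs : Tendsto (fun i => dilate (r i) (μs i)) l (𝓝 ν)) (hr : ∀ᶠ i in l, 0 < r i)
    (hμ : μ ≠ diracProba 0) (hν : ν ≠ diracProba 0) :
    ∃ c, 0 < c ∧ Tendsto r l (𝓝 c) := by
  have hlim (U : Ultrafilter α) (hU : ↑U ≤ l) :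
      ∃ c, 0 < c ∧ Tendsto r U (𝓝 c) ∧ ν = dilate c μ := by
    obtain ⟨c, hc, hrc⟩ := exists_tendsto_nhds_pos_of_tendsto_dilate_ultrafilter
      (hμs.mono_left hU) (hνs.mono_left hU) (hr.filter_mono hU) hμ hν
    exact ⟨c, hc, hrc, tendsto_nhds_unique (hνs.mono_left hU)
      (tendsto_dilate hrc (hμs.mono_left hU))⟩
  obtain ⟨c, hc, -, hνc⟩ := hlim (Ultrafilter.of l) (Ultrafilter.of_le l)
  refine ⟨c, hc, (tendsto_iff_ultrafilter _ _ _).2 fun U hU => ?_⟩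
  obtain ⟨c', hc', hrc', hνc'⟩ := hlim U hU
  rwa [dilate_injOn_Ioi hμ hc hc' (hνc.symm.trans hνc')]

end ConvergenceOfTypes

section Law

variable {Ω E : Type*} [MeasurableSpace Ω] {P : Measure Ω} [IsProbabilityMeasure P]
  [TopologicalSpace E] [MeasurableSpace E] [BorelSpace E] {Z : Ω → E}

/-- The law of `Z` as an element of `ProbabilityMeasure E`, the form in which it appears in
`TendstoInDistribution`. -/
noncomputable def law (hZ : AEMeasurable Z P) : ProbabilityMeasure E :=
  ⟨P.map Z, Measure.isProbabilityMeasure_map hZ⟩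

theorem dilate_law {R : Type*} [SMul R E] [ContinuousConstSMul R E] {W : Ω → E} {c : R}
    (hZ : AEMeasurable Z P) (hW : AEMeasurable W P) (h : ∀ ω, W ω = c • Z ω) :
    dilate c (law hZ) = law hW := by
  apply Subtype.ext
  change (P.map Z).map _ = P.map W
  rw [AEMeasurable.map_map_of_aemeasurable (continuous_const_smul c).measurable.aemeasurable hZ,
    funext h]
  rfl

theorem law_ne_diracProba_zero [T1Space E] [Zero E] (hZ : AEMeasurable Z P)
    (h : ¬ Z =ᵐ[P] 0) : law hZ ≠ diracProba 0 := by
  refine fun heq => h ?_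
  have hmap : P.map Z = Measure.dirac 0 := congrArg Subtype.val heq
  refine ae_of_ae_map (p := fun x => x = 0) hZ ?_
  rw [hmap, ae_dirac_eq]
  rfl

end Law

section RegularVariation

variable {ι : Type*}

theorem eventually_forall_pos_atTop : ∀ᶠ n : ι → ℝ in atTop, ∀ i, 0 < n i := by
  filter_upwards [eventually_ge_atTop 1] with n hn i
  exact zero_lt_one.trans_le (hn i)

theorem tendsto_mul_const_atTop_atTop {a : ι → ℝ} (ha : ∀ i, 0 < a i) :
    Tendsto (fun n : ι → ℝ => n * a) atTop atTop := by
  refine tendsto_atTop.2 fun b => ?_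
  filter_upwards [eventually_ge_atTop (b / a)] with n hn i
  exact (div_le_iff₀ (ha i)).1 (hn i)

/-- Coordinate-wise regular variation of a positive function on the open orthant `(0,∞)^ι`:
`f (n * a) / f n → c a` as all coordinates of `n` tend to infinity. The values of `f` and `c`
outside the open orthant are irrelevant. -/
structure IsRegularlyVarying (f c : (ι → ℝ) → ℝ) : Prop where
  pos : ∀ n, (∀ i, 0 < n i) → 0 < f n
  index_pos : ∀ a, (∀ i, 0 < a i) → 0 < c a
  tendsto : ∀ a, (∀ i, 0 < a i) → Tendsto (fun n => f (n * a) / f n) atTop (𝓝 (c a))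

/-- Coordinate-wise slowly varying functions (c.s.v.f.). -/
def IsSlowlyVarying (L : (ι → ℝ) → ℝ) : Prop :=
  IsRegularlyVarying L 1

theorem IsRegularlyVarying.index_mul {f c : (ι → ℝ) → ℝ} (hf : IsRegularlyVarying f c)
    {a b : ι → ℝ} (ha : ∀ i, 0 < a i) (hb : ∀ i, 0 < b i) : c (a * b) = c a * c b := by
  refine tendsto_nhds_unique (hf.tendsto _ fun i => mul_pos (ha i) (hb i)) ?_
  refine ((hf.tendsto a ha).mul
    ((hf.tendsto b hb).comp (tendsto_mul_const_atTop_atTop ha))).congr' ?_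
  filter_upwards [eventually_forall_pos_atTop] with n hn
  have hfn : f (n * a) ≠ 0 := (hf.pos _ fun i => mul_pos (hn i) (ha i)).ne'
  rw [Function.comp_apply, mul_assoc n a b, mul_comm, div_mul_div_cancel₀ hfn]

theorem IsRegularlyVarying.div_isSlowlyVarying {f g c c' : (ι → ℝ) → ℝ}
    (hf : IsRegularlyVarying f c) (hg : IsRegularlyVarying g c')
    (hcc' : ∀ a, (∀ i, 0 < a i) → c a = c' a) : IsSlowlyVarying fun n => f n / g n where
  pos n hn := div_pos (hf.pos n hn) (hg.pos n hn)
  index_pos _ _ := zero_lt_one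
  tendsto a ha := by
    have hlim := (hf.tendsto a ha).div (hg.tendsto a ha) (hg.index_pos a ha).ne'
    rw [hcc' a ha, div_self (hg.index_pos a ha).ne'] at hlim
    exact hlim.congr fun n => div_div_div_comm _ _ _ _

theorem isRegularlyVarying_prod_rpow [Fintype ι] (H : ι → ℝ) :
    IsRegularlyVarying (fun n => ∏ i, n i ^ H i) (fun a => ∏ i, a i ^ H i) := by
  have hpos (n : ι → ℝ) (hn : ∀ i, 0 < n i) : 0 < ∏ i, n i ^ H i :=
    Finset.prod_pos fun i _ => Real.rpow_pos_of_pos (hn i) _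
  refine ⟨hpos, hpos, fun a ha => tendsto_const_nhds.congr' ?_⟩
  filter_upwards [eventually_forall_pos_atTop] with n hn
  have hsplit : ∏ i, (n * a) i ^ H i = (∏ i, n i ^ H i) * ∏ i, a i ^ H i := by
    rw [← Finset.prod_mul_distrib]
    exact Finset.prod_congr rfl fun i _ => Real.mul_rpow (hn i).le (ha i).le
  rw [hsplit, mul_div_cancel_left₀ _ (hpos n hn).ne']

end RegularVariation

section PowerFunctions

theorem exists_eq_rpow_of_map_mul {g : ℝ → ℝ} (hpos : ∀ x, 0 < x → 0 < g x)
    (hmul : ∀ x y, 0 < x → 0 < y → g (x * y) = g x * g y)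
    (hle : ∀ x, 0 < x → x < 1 → g x ≤ 1) :
    ∃ H : ℝ, 0 ≤ H ∧ ∀ x, 0 < x → g x = x ^ H := by
  let φ : ℝ →+ ℝ := AddMonoidHom.mk' (fun u => Real.log (g (Real.exp u))) fun u v => by
    rw [Real.exp_add, hmul _ _ (Real.exp_pos u) (Real.exp_pos v),
      Real.log_mul (hpos _ (Real.exp_pos u)).ne' (hpos _ (Real.exp_pos v)).ne']
  have hneg (u : ℝ) (hu : u ≤ 0) : φ u ≤ 0 := by
    rcases hu.eq_or_lt with rfl | hu
    · exact (map_zero φ).le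
    · exact Real.log_nonpos (hpos _ (Real.exp_pos u)).le
        (hle _ (Real.exp_pos u) (Real.exp_lt_one_iff.2 hu))
  have hmono : Monotone φ := fun u v huv => by
    simpa only [map_sub, sub_nonpos] using hneg (u - v) (sub_nonpos.2 huv)
  have hcont : Continuous φ :=
    MeasureTheory.Measure.AddMonoidHom.continuous_of_measurable φ hmono.measurable
  refine ⟨φ 1, by simpa only [map_zero] using hmono zero_le_one, fun x hx => ?_⟩
  have hlog : Real.log (g x) = Real.log x * φ 1 := by
    simpa [φ, Real.exp_log hx] using map_real_smul φ hcont (Real.log x) 1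
  rw [Real.rpow_def_of_pos hx, ← hlog, Real.exp_log (hpos x hx)]

variable {ι : Type*} {c : (ι → ℝ) → ℝ}

theorem map_one_of_map_mul (hpos : ∀ a, (∀ i, 0 < a i) → 0 < c a)
    (hmul : ∀ a b, (∀ i, 0 < a i) → (∀ i, 0 < b i) → c (a * b) = c a * c b) : c 1 = 1 := by
  have hone : ∀ i, 0 < (1 : ι → ℝ) i := fun _ => zero_lt_one
  have h := hmul 1 1 hone hone
  rw [mul_one] at h
  exact (mul_eq_left₀ (hpos 1 hone).ne').1 h.symm

variable [DecidableEq ι]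

theorem mulSingle_apply_pos (i : ι) {x : ℝ} (hx : 0 < x) (l : ι) :
    0 < (Pi.mulSingle i x : ι → ℝ) l := by
  rcases eq_or_ne l i with rfl | hl
  · simpa only [Pi.mulSingle_eq_same]
  · simp only [Pi.mulSingle_eq_of_ne hl, zero_lt_one]

theorem map_mulSingle_pow_of_map_mul (hpos : ∀ a, (∀ i, 0 < a i) → 0 < c a)
    (hmul : ∀ a b, (∀ i, 0 < a i) → (∀ i, 0 < b i) → c (a * b) = c a * c b)
    (i : ι) {x : ℝ} (hx : 0 < x) (n : ℕ) :
    c (Pi.mulSingle i (x ^ n)) = c (Pi.mulSingle i x) ^ n := by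
  induction n with
  | zero => simp only [pow_zero, Pi.mulSingle_one, map_one_of_map_mul hpos hmul]
  | succ n ih =>
    rw [pow_succ, Pi.mulSingle_mul, hmul _ _ (mulSingle_apply_pos i (pow_pos hx n))
      (mulSingle_apply_pos i hx), ih, pow_succ]

theorem map_prod_mulSingle_of_map_mul (hpos : ∀ a, (∀ i, 0 < a i) → 0 < c a)
    (hmul : ∀ a b, (∀ i, 0 < a i) → (∀ i, 0 < b i) → c (a * b) = c a * c b)
    {a : ι → ℝ} (ha : ∀ i, 0 < a i) (s : Finset ι) :
    c (∏ i ∈ s, Pi.mulSingle i (a i)) = ∏ i ∈ s, c (Pi.mulSingle i (a i)) := by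
  induction s using Finset.induction_on with
  | empty => simpa only [Finset.prod_empty] using map_one_of_map_mul hpos hmul
  | insert i s his ih =>
    have hs (l : ι) : 0 < (∏ k ∈ s, Pi.mulSingle k (a k) : ι → ℝ) l := by
      rw [Finset.prod_apply]
      exact Finset.prod_pos fun k _ => mulSingle_apply_pos k (ha k) l
    rw [Finset.prod_insert his, Finset.prod_insert his,
      hmul _ _ (mulSingle_apply_pos i (ha i)) hs, ih]

theorem exists_eq_prod_rpow_of_map_mul [Fintype ι] (hpos : ∀ a, (∀ i, 0 < a i) → 0 < c a)
    (hmul : ∀ a b, (∀ i, 0 < a i) → (∀ i, 0 < b i) → c (a * b) = c a * c b)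
    (hle : ∀ i x, 0 < x → x < 1 → c (Pi.mulSingle i x) ≤ 1) :
    ∃ H : ι → ℝ, (∀ i, 0 ≤ H i) ∧ ∀ a, (∀ i, 0 < a i) → c a = ∏ i, a i ^ H i := by
  have hrpow (i : ι) : ∃ H : ℝ, 0 ≤ H ∧ ∀ x, 0 < x → c (Pi.mulSingle i x) = x ^ H :=
    exists_eq_rpow_of_map_mul (fun x hx => hpos _ (mulSingle_apply_pos i hx))
      (fun x y hx hy => by
        rw [Pi.mulSingle_mul, hmul _ _ (mulSingle_apply_pos i hx) (mulSingle_apply_pos i hy)])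
      (hle i)
  choose H hH0 hH using hrpow
  refine ⟨H, hH0, fun a ha => ?_⟩
  calc c a = c (∏ i, Pi.mulSingle i (a i)) := by rw [Finset.univ_prod_mulSingle]
    _ = ∏ i, c (Pi.mulSingle i (a i)) := map_prod_mulSingle_of_map_mul hpos hmul ha _
    _ = ∏ i, a i ^ H i := Finset.prod_congr rfl fun i _ => hH i _ (ha i)

end PowerFunctions

section ScalingLimits

theorem div_eq_mul_div_mul_mul {ι κ : Type*} {Y f : (ι → ℝ) → κ → ℝ} {n a : ι → ℝ}
    (hf : ∀ j, f (n * a) j ≠ 0) (t : ι → ℝ) :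
    Y (n * (a * t)) / f n = f (n * a) / f n * (Y (n * a * t) / f (n * a)) := by
  funext j
  rw [← mul_assoc]
  exact (div_mul_div_cancel₀' (hf j) _ _).symm

variable {α T Ω Ω' : Type*} [MeasurableSpace Ω] [MeasurableSpace Ω']
  {P : Measure Ω} [IsProbabilityMeasure P] {P' : Measure Ω'} [IsProbabilityMeasure P']

/-- Convergence of the finite-dimensional distributions, at the points of `S`, of the random
fields `Y n`, indexed by `T`, to those of `Z`. -/
def TendstoInFiniteDimDistributions {E : Type*} [TopologicalSpace E] [MeasurableSpace E]
    [SecondCountableTopology E] [BorelSpace E] (Y : α → T → Ω' → E) (l : Filter α) (Z : T → Ω → E)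
    (S : Set T) (P' : Measure Ω') [IsProbabilityMeasure P'] (P : Measure Ω)
    [IsProbabilityMeasure P] : Prop :=
  ∀ (k : ℕ) (t : Fin k → T), (∀ i, t i ∈ S) →
    TendstoInDistribution (fun n ω i => Y n (t i) ω) l (fun ω i => Z (t i) ω) (fun _ => P') P

theorem tendstoInFiniteDimDistributions_of_integral {E : Type*} [TopologicalSpace E]
    [MeasurableSpace E] [SecondCountableTopology E] [BorelSpace E] {Y : α → T → Ω' → E}
    {l : Filter α} {Z : T → Ω → E} {S : Set T} (hY : ∀ n t, Measurable (Y n t))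
    (hZ : ∀ t, Measurable (Z t))
    (h : ∀ (k : ℕ) (t : Fin k → T), (∀ i, t i ∈ S) →
      ∀ φ : BoundedContinuousFunction (Fin k → E) ℝ,
        Tendsto (fun n => ∫ ω, φ (fun i => Y n (t i) ω) ∂P') l
          (𝓝 (∫ ω, φ (fun i => Z (t i) ω) ∂P))) :
    TendstoInFiniteDimDistributions Y l Z S P' P := by
  intro k t ht
  have hYt (n : α) : Measurable fun ω i => Y n (t i) ω := measurable_pi_lambda _ fun i => hY n (t i)
  have hZt : Measurable fun ω i => Z (t i) ω := measurable_pi_lambda _ fun i => hZ (t i)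
  refine ⟨fun n => (hYt n).aemeasurable, hZt.aemeasurable,
    ProbabilityMeasure.tendsto_iff_forall_integral_tendsto.2 fun φ => ?_⟩
  simp only [ProbabilityMeasure.coe_mk]
  rw [integral_map hZt.aemeasurable φ.continuous.aestronglyMeasurable]
  refine (h k t ht φ).congr fun n => ?_
  rw [integral_map (hYt n).aemeasurable φ.continuous.aestronglyMeasurable]

theorem TendstoInFiniteDimDistributions.eval {E : Type*} [TopologicalSpace E] [MeasurableSpace E]
    [SecondCountableTopology E] [BorelSpace E] {Y : α → T → Ω' → E} {l : Filter α} {Z : T → Ω → E}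
    {S : Set T} (h : TendstoInFiniteDimDistributions Y l Z S P' P) {t : T} (ht : t ∈ S) :
    TendstoInDistribution (fun n => Y n t) l (Z t) (fun _ => P') P :=
  (h 1 (fun _ => t) fun _ => ht).continuous_comp (g := fun x : Fin 1 → E => x 0)
    (continuous_apply 0)

/-- Continuity in probability, along sequences in `S`, of a random field indexed by `T`. -/
def ContinuousInProbabilityOn {E : Type*} [EDist E] [TopologicalSpace T] (X : T → Ω → E)
    (S : Set T) (P : Measure Ω) : Prop :=
  ∀ t ∈ S, ∀ u : ℕ → T, (∀ n, u n ∈ S) → Tendsto u atTop (𝓝 t) →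
    TendstoInMeasure P (fun n => X (u n)) atTop (X t)

variable {ι κ : Type*}

/-- Multi-self-similarity of an `ℝ^κ`-valued random field on the closed orthant: the field
`X (a * t)` has the same finite-dimensional distributions as `(∏ i, a i ^ H j i) * X t ω j`.
The row `H j` holds the exponents of the `j`-th component of `X`. -/
def IsMultiSelfSimilar [Fintype ι] (X : (ι → ℝ) → Ω → κ → ℝ) (H : κ → ι → ℝ) (P : Measure Ω) :
    Prop :=
  ∀ a : ι → ℝ, (∀ i, 0 < a i) → ∀ (k : ℕ) (t : Fin k → ι → ℝ), (∀ i, 0 ≤ t i) →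
    P.map (fun ω i => X (a * t i) ω)
      = P.map (fun ω i j => (∏ i', a i' ^ H j i') * X (t i) ω j)

variable {Y : (ι → ℝ) → Ω' → κ → ℝ} {f : (ι → ℝ) → κ → ℝ} {X : (ι → ℝ) → Ω → κ → ℝ}

theorem exists_isRegularlyVarying_of_tendsto [Countable κ]
    (hY : TendstoInFiniteDimDistributions (fun n t ω => Y (n * t) ω / f n) atTop X
      (Set.Ici 0) P' P)
    (hf : ∀ n : ι → ℝ, (∀ i, 0 < n i) → ∀ j, 0 < f n j)
    {j : κ} (hX : ∀ t : ι → ℝ, (∀ i, 0 < t i) → ¬ (fun ω => X t ω j) =ᵐ[P] 0) :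
    ∃ c, IsRegularlyVarying (fun n => f n j) c := by
  have hlim (t : ι → ℝ) (ht : 0 ≤ t) : TendstoInDistribution
      (fun n ω => Y (n * t) ω j / f n j) atTop (fun ω => X t ω j) (fun _ => P') P :=
    (hY.eval ht).continuous_comp (g := fun x : κ → ℝ => x j) (continuous_apply j)
  have hratio (a : ι → ℝ) (ha : ∀ i, 0 < a i) :
      ∃ c, 0 < c ∧ Tendsto (fun n => f (n * a) j / f n j) atTop (𝓝 c) := by
    have h1 := hlim 1 zero_le_one
    have ha1 := hlim (a * 1) (mul_nonneg (fun i => (ha i).le) zero_le_one)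
    refine exists_tendsto_nhds_pos_of_tendsto_dilate
      (h1.tendsto.comp (tendsto_mul_const_atTop_atTop ha)) (ha1.tendsto.congr' ?_) ?_
      (law_ne_diracProba_zero h1.aemeasurable_limit (hX 1 fun _ => zero_lt_one))
      (law_ne_diracProba_zero ha1.aemeasurable_limit (hX _ (by simpa only [mul_one] using ha)))
    · filter_upwards [eventually_forall_pos_atTop] with n hn
      have hna := hf _ fun i => mul_pos (hn i) (ha i)
      exact (dilate_law (h1.forall_aemeasurable _) (ha1.forall_aemeasurable n) fun ω =>
        congrFun (div_eq_mul_div_mul_mul (Y := (Y · ω)) (fun j => (hna j).ne') 1) j).symm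
    · filter_upwards [eventually_forall_pos_atTop] with n hn
      exact div_pos (hf _ (fun i => mul_pos (hn i) (ha i)) j) (hf n hn j)
  choose! c hc hlimc using hratio
  exact ⟨c, fun n hn => hf n hn j, hc, hlimc⟩

theorem map_mul_eq_of_isRegularlyVarying [Countable κ]
    (hY : TendstoInFiniteDimDistributions (fun n t ω => Y (n * t) ω / f n) atTop X
      (Set.Ici 0) P' P)
    {c : κ → (ι → ℝ) → ℝ} (hf : ∀ j, IsRegularlyVarying (fun n => f n j) (c j))
    {a : ι → ℝ} (ha : ∀ i, 0 < a i) {k : ℕ} {t : Fin k → ι → ℝ} (ht : ∀ i, 0 ≤ t i) :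
    P.map (fun ω i => X (a * t i) ω) = P.map (fun ω i j => c j a * X (t i) ω j) := by
  have hlim := hY k t ht
  have hlima := hY k (fun i => a * t i) fun i => mul_nonneg (fun l => (ha l).le) (ht i)
  have hdilate := tendsto_dilate (tendsto_pi_nhds.2 fun j => (hf j).tendsto a ha)
    (hlim.tendsto.comp (tendsto_mul_const_atTop_atTop ha))
  have heq := tendsto_nhds_unique (hlima.tendsto.congr' ?_) hdilate
  · have hmeas : AEMeasurable (fun ω i j => c j a * X (t i) ω j) P :=
      (continuous_const_smul fun j => c j a).measurable.comp_aemeasurable hlim.aemeasurable_limit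
    exact congrArg Subtype.val
      (heq.trans (dilate_law hlim.aemeasurable_limit hmeas fun _ => rfl))
  · filter_upwards [eventually_forall_pos_atTop] with n hn
    have hna j := (hf j).pos _ fun i => mul_pos (hn i) (ha i)
    exact (dilate_law (hlim.forall_aemeasurable _) (hlima.forall_aemeasurable n) fun ω =>
      funext fun i => div_eq_mul_div_mul_mul (Y := (Y · ω)) (fun j => (hna j).ne') (t i)).symm

theorem law_apply_eq_dilate_of_isRegularlyVarying [Countable κ]
    (hY : TendstoInFiniteDimDistributions (fun n t ω => Y (n * t) ω / f n) atTop X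
      (Set.Ici 0) P' P)
    {c : κ → (ι → ℝ) → ℝ} (hf : ∀ j, IsRegularlyVarying (fun n => f n j) (c j))
    {a : ι → ℝ} (ha : ∀ i, 0 < a i) {j : κ}
    (hXa : AEMeasurable (fun ω => X a ω j) P) (hX1 : AEMeasurable (fun ω => X 1 ω j) P) :
    law hXa = dilate (c j a) (law hX1) := by
  have hmap := map_mul_eq_of_isRegularlyVarying hY hf ha (k := 1) (t := fun _ => 1)
    fun _ => zero_le_one
  have hlim := hY 1 (fun _ => 1) fun _ => Set.mem_Ici.2 zero_le_one
  have hlima := hY 1 (fun _ => a) fun _ i => (ha i).le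
  have heval : Measurable fun x : Fin 1 → κ → ℝ => x 0 j := by fun_prop
  have hscale : AEMeasurable (fun ω (_ : Fin 1) j => c j a * X 1 ω j) P :=
    (continuous_const_smul fun j => c j a).measurable.comp_aemeasurable hlim.aemeasurable_limit
  rw [dilate_law hX1 (hX1.const_mul (c j a)) fun _ => rfl]
  apply Subtype.ext
  simp only [mul_one] at hmap
  have hmapj := congrArg (Measure.map fun x : Fin 1 → κ → ℝ => x 0 j) hmap
  rwa [AEMeasurable.map_map_of_aemeasurable heval.aemeasurable hlima.aemeasurable_limit,
    AEMeasurable.map_map_of_aemeasurable heval.aemeasurable hscale] at hmapj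

-- The law at the boundary point `Pi.mulSingle i 0` is the limit of the laws at
-- `Pi.mulSingle i (x ^ n)`, which are dilations of one nonzero law by powers of the index.
theorem index_mulSingle_le_one [Fintype κ] [DecidableEq ι]
    (hY : TendstoInFiniteDimDistributions (fun n t ω => Y (n * t) ω / f n) atTop X
      (Set.Ici 0) P' P)
    (hXcont : ContinuousInProbabilityOn X (Set.Ici 0) P)
    {c : κ → (ι → ℝ) → ℝ} (hf : ∀ j, IsRegularlyVarying (fun n => f n j) (c j))
    {j : κ} (hX : ¬ (fun ω => X 1 ω j) =ᵐ[P] 0) (i : ι) {x : ℝ} (hx : 0 < x) (hx1 : x < 1) :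
    c j (Pi.mulSingle i x) ≤ 1 := by
  have hmeas {t : ι → ℝ} (ht : 0 ≤ t) : AEMeasurable (X t) P := (hY.eval ht).aemeasurable_limit
  have hpos (n : ℕ) := mulSingle_apply_pos i (pow_pos hx n)
  have hnonneg (n : ℕ) : 0 ≤ (Pi.mulSingle i (x ^ n) : ι → ℝ) := fun l => (hpos n l).le
  have hnonneg0 : 0 ≤ (Pi.mulSingle i 0 : ι → ℝ) :=
    le_update_iff.2 ⟨le_rfl, fun _ _ => zero_le_one⟩
  have hlim : TendstoInDistribution (fun (n : ℕ) ω => X (Pi.mulSingle i (x ^ n)) ω j) atTop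
      (fun ω => X (Pi.mulSingle i 0) ω j) (fun _ => P) P :=
    ((hXcont _ hnonneg0 _ hnonneg (((continuous_mulSingle i).tendsto 0).comp
      (tendsto_pow_atTop_nhds_zero_of_lt_one hx.le hx1))).tendstoInDistribution
        (fun n => hmeas (hnonneg n))).continuous_comp (g := fun y : κ → ℝ => y j)
      (continuous_apply j)
  have hX1 : AEMeasurable (fun ω => X 1 ω j) P :=
    (measurable_pi_apply j).comp_aemeasurable (hmeas zero_le_one)
  refine (le_abs_self _).trans (abs_le_one_of_tendsto_dilate_pow
    (law_ne_diracProba_zero hX1 hX) (hlim.tendsto.congr fun n => ?_))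
  rw [← map_mulSingle_pow_of_map_mul (hf j).index_pos (fun _ _ => (hf j).index_mul) i hx n]
  exact law_apply_eq_dilate_of_isRegularlyVarying hY hf (hpos n) (hlim.forall_aemeasurable n) hX1

theorem stmt_15_general [Fintype ι] [Fintype κ]
    (hXcont : ContinuousInProbabilityOn X (Set.Ici 0) P)
    (hX : ∀ j (t : ι → ℝ), (∀ i, 0 < t i) → ¬ (fun ω => X t ω j) =ᵐ[P] 0)
    (hf : ∀ n : ι → ℝ, (∀ i, 0 < n i) → ∀ j, 0 < f n j)
    (hY : TendstoInFiniteDimDistributions (fun n t ω => Y (n * t) ω / f n) atTop X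
      (Set.Ici 0) P' P) :
    ∃ (H : κ → ι → ℝ) (L : κ → (ι → ℝ) → ℝ), (∀ j i, 0 ≤ H j i) ∧ (∀ j, IsSlowlyVarying (L j)) ∧
      (∀ n : ι → ℝ, (∀ i, 0 < n i) → ∀ j, f n j = (∏ i, n i ^ H j i) * L j n) ∧
      IsMultiSelfSimilar X H P := by
  classical
  choose c hc using fun j => exists_isRegularlyVarying_of_tendsto hY hf (hX j)
  choose H hH hcH using fun j => exists_eq_prod_rpow_of_map_mul (hc j).index_pos
    (fun _ _ => (hc j).index_mul) fun i _ =>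
      index_mulSingle_le_one hY hXcont hc (hX j 1 fun _ => zero_lt_one) i
  have hpow (j : κ) := isRegularlyVarying_prod_rpow (H j)
  refine ⟨H, fun j n => f n j / ∏ i, n i ^ H j i, hH,
    fun j => (hc j).div_isSlowlyVarying (hpow j) (hcH j),
    fun n hn j => (mul_div_cancel₀ _ ((hpow j).pos n hn).ne').symm, fun a ha k t ht => ?_⟩
  simpa only [hcH _ a ha] using map_mul_eq_of_isRegularlyVarying hY hc ha ht

end ScalingLimits

section PartialSums

variable {ι κ Ω : Type*} [Fintype ι] [DecidableEq ι]

/-- The partial sum `S_{[t]}(ξ - b)` over the lattice points of the box `∏ l, [1, ⌊t l⌋]`. -/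
noncomputable def partialSum (ξ : (ι → ℤ) → Ω → κ → ℝ) (b : κ → ℝ) (t : ι → ℝ) (ω : Ω) : κ → ℝ :=
  fun j => ∑ i ∈ Finset.Icc (1 : ι → ℤ) (fun l => ⌊t l⌋), (ξ i ω j - b j)

theorem measurable_partialSum [MeasurableSpace Ω] {ξ : (ι → ℤ) → Ω → κ → ℝ}
    (hξ : ∀ i, Measurable (ξ i)) (b : κ → ℝ) (t : ι → ℝ) : Measurable (partialSum ξ b t) :=
  measurable_pi_lambda _ fun j => Finset.measurable_fun_sum _ fun i _ =>
    ((measurable_pi_apply j).comp (hξ i)).sub_const (b j)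

end PartialSums

/-- Let `ξ = {ξ_i, i ∈ ℤ^d}` be a strictly stationary `ℝ^m`-valued
random field, `b ∈ ℝ^m`, and let
`S_{[n·t]}(ξ−b) = Σ_{i₁=1}^{[n₁t₁]} ⋯ Σ_{i_d=1}^{[n_dt_d]} (ξ_i − b)`.
Suppose the normalized partial-sum fields `(S_{[n·t]}(ξ−b)_j / f_j(n))_j` converge
in finite-dimensional distributions, as `n → ∞` (`min_i n_i → ∞`), to a field `X`
that is continuous in probability with `X_j(t)` not a.s. constant for `t ∈ (0,∞)^d`,
where `f_j(n) → ∞`. Then `f_j(n) = (∏_i n_i^{H_i^{(j)}})·L_j(n)` with nonnegative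
reals `H_i^{(j)}` and coordinate-wise slowly varying `L_j`, and `X` is
multi-self-similar with exponents `H`. -/
theorem stmt_15 {d m : ℕ} {Ω Ω' : Type*} [MeasurableSpace Ω] [MeasurableSpace Ω']
    (P : Measure Ω) [IsProbabilityMeasure P]
    (P' : Measure Ω') [IsProbabilityMeasure P']
    (ξ : (Fin d → ℤ) → Ω' → (Fin m → ℝ)) (b : Fin m → ℝ)
    (hξmeas : ∀ i, Measurable (ξ i))
    -- strict stationarity of `ξ`
    (hstat : ∀ (h : Fin d → ℤ) (k : ℕ) (t : Fin k → Fin d → ℤ),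
      Measure.map (fun ω => fun i => ξ (t i + h) ω) P'
        = Measure.map (fun ω => fun i => ξ (t i) ω) P')
    (X : (Fin d → ℝ) → Ω → (Fin m → ℝ))
    (hXmeas : ∀ t, Measurable (X t))
    -- `X` is continuous in probability on `[0,∞)^d`
    (hXcont : ∀ t : Fin d → ℝ, (∀ i, 0 ≤ t i) →
      ∀ u : ℕ → Fin d → ℝ, (∀ n i, 0 ≤ u n i) → Tendsto u atTop (𝓝 t) →
        TendstoInMeasure P (fun n => X (u n)) atTop (X t))
    -- `X_j(t)` is not a.s. constant for `t ∈ (0,∞)^d`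
    (hXnd : ∀ (j : Fin m) (t : Fin d → ℝ), (∀ i, 0 < t i) →
      ¬ ∃ c : ℝ, ∀ᵐ ω ∂P, X t ω j = c)
    (f : (Fin d → ℝ) → Fin m → ℝ)
    (hfpos : ∀ n : Fin d → ℝ, (∀ i, 0 < n i) → ∀ j, 0 < f n j)
    -- `f_j(n) → ∞` as `n → ∞`
    (hftop : ∀ j, Tendsto (fun n : Fin d → ℝ => f n j) atTop atTop)
    -- convergence of finite-dimensional distributions of the normalized sums
    (hconv : ∀ (k : ℕ) (t : Fin k → Fin d → ℝ), (∀ i i', 0 ≤ t i i') →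
      ∀ φ : BoundedContinuousFunction (Fin k → Fin m → ℝ) ℝ,
        Tendsto (fun n : Fin d → ℝ =>
            ∫ ω, φ (fun i => fun j =>
              (∑ i' ∈ Finset.Icc (1 : Fin d → ℤ) (fun l => ⌊n l * t i l⌋),
                (ξ i' ω j - b j)) / f n j) ∂P')
          atTop (𝓝 (∫ ω, φ (fun i => X (t i) ω) ∂P))) :
    ∃ (H : Fin m → Fin d → ℝ) (L : Fin m → (Fin d → ℝ) → ℝ),
      (∀ j i, 0 ≤ H j i) ∧
      (∀ (j : Fin m) (n : Fin d → ℝ), (∀ i, 0 < n i) → 0 < L j n) ∧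
      -- each `L j` is coordinate-wise slowly varying
      (∀ (j : Fin m) (x : Fin d → ℝ), (∀ i, 0 < x i) →
        Tendsto (fun n : Fin d → ℝ => L j (n * x) / L j n) atTop (𝓝 1)) ∧
      (∀ n : Fin d → ℝ, (∀ i, 0 < n i) → ∀ j,
        f n j = (∏ i, n i ^ H j i) * L j n) ∧
      -- `X` is multi-self-similar
      (∀ a : Fin d → ℝ, (∀ i, 0 < a i) →
        ∀ (k : ℕ) (t : Fin k → Fin d → ℝ), (∀ i i', 0 ≤ t i i') →
          Measure.map (fun ω => fun i => X (a * t i) ω) P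
            = Measure.map
                (fun ω => fun i => fun j => (∏ i', a i' ^ H j i') * X (t i) ω j) P) := by
  have hlim : TendstoInFiniteDimDistributions (fun n t ω => partialSum ξ b (n * t) ω / f n) atTop X
      (Set.Ici 0) P' P :=
    tendstoInFiniteDimDistributions_of_integral
      (fun n t => (measurable_partialSum hξmeas b (n * t)).div_const (f n)) hXmeas hconv
  obtain ⟨H, L, hH, hL, hfL, hXss⟩ :=
    stmt_15_general hXcont (fun j t ht h => hXnd j t ht ⟨0, h⟩) hfpos hlim
  exact ⟨H, L, hH, fun j => (hL j).pos, fun j => (hL j).tendsto, hfL, hXss⟩
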